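/- Let p ≥ 2 be real. For every real sequence (x_n)_{n≥1} with ∑_{n=1}^∞ |x_n|^p < ∞, setting y_n = (1/n)·∑_{k=1}^n x_k, one has ∑_{n=1}^∞ |y_n - x_n|^p ≤ (1/m_p) · ∑_{n=1}^∞ |x_n|^p; moreover 1/m_p is the least such constant: for every c < 1/m_p there exists a real sequence (x_n) with 0 < ∑_{n=1}^∞ |x_n|^p < ∞ and ∑_{n=1}^∞ |y_n - x_n|^p > c · ∑_{n=1}^∞ |x_n|^p. That is, the operator norm of C - I on ℓ^p equals m_p^{-1/p}. -/

import Mathlib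

/-- `m_p`: the minimum value of `f_p(t) = p t^(p-1) + (1-t)^p - t^p` on `[0, 1/2]`. -/
noncomputable def mVal (p : ℝ) : ℝ :=
  sInf ((fun t : ℝ => p * t ^ (p - 1) + (1 - t) ^ p - t ^ p) '' Set.Icc 0 (1 / 2))

lemma tang {a b q : ℝ} (ha : 0 < a) (hb : 0 ≤ b) (hq : 1 ≤ q) :
    a ^ q + q * a ^ (q - 1) * (b - a) ≤ b ^ q := by
  have h := one_add_mul_self_le_rpow_one_add (s := b / a - 1) (p := q)
    (by have : 0 ≤ b / a := by positivity
        linarith) hq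
  have e : 1 + (b / a - 1) = b / a := by ring
  rw [e, Real.div_rpow hb ha.le, le_div_iff₀ (by positivity)] at h
  have e2 : a ^ q = a ^ (q - 1) * a := by
    rw [← Real.rpow_add_one ha.ne']; ring_nf
  calc _ = (1 + q * (b / a - 1)) * a ^ q := by
        rw [e2]; field_simp
    _ ≤ _ := h

lemma fcont (p : ℝ) (hp : 2 ≤ p) :
    Continuous (fun t : ℝ => p * t ^ (p - 1) + (1 - t) ^ p - t ^ p) := by
  have h1 : Continuous (fun t : ℝ => t ^ (p - 1)) :=
    continuous_id.rpow_const (fun _ => Or.inr (by linarith))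
  have h2 : Continuous (fun t : ℝ => (1 - t) ^ p) :=
    (continuous_const.sub continuous_id).rpow_const (fun _ => Or.inr (by linarith))
  have h3 : Continuous (fun t : ℝ => t ^ p) :=
    continuous_id.rpow_const (fun _ => Or.inr (by linarith))
  exact ((continuous_const.mul h1).add h2).sub h3

lemma mVal_spec (p : ℝ) (hp : 2 ≤ p) :
    (∃ t ∈ Set.Icc (0 : ℝ) (1 / 2), mVal p = p * t ^ (p - 1) + (1 - t) ^ p - t ^ p) ∧
    ∀ t ∈ Set.Icc (0 : ℝ) (1 / 2), mVal p ≤ p * t ^ (p - 1) + (1 - t) ^ p - t ^ p := by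
  have hK : IsCompact (Set.Icc (0 : ℝ) (1 / 2)) := isCompact_Icc
  have hne : (Set.Icc (0 : ℝ) (1 / 2)).Nonempty := ⟨0, by norm_num⟩
  obtain ⟨t, ht, h1, h2⟩ := hK.exists_sInf_image_eq_and_le hne (fcont p hp).continuousOn
  refine ⟨⟨t, ht, h1⟩, fun s hs => ?_⟩
  have := h2 s hs
  unfold mVal
  rw [h1]; exact this

lemma mVal_pos (p : ℝ) (hp : 2 ≤ p) : 0 < mVal p := by
  obtain ⟨⟨t, ⟨h0, h1⟩, h⟩, -⟩ := mVal_spec p hp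
  rw [h]
  rcases h0.eq_or_lt with rfl | h0
  · rw [Real.zero_rpow (by linarith), Real.zero_rpow (by linarith)]; norm_num
  · have : t ^ p ≤ (1 - t) ^ p := Real.rpow_le_rpow h0.le (by linarith) (by linarith)
    have : 0 < p * t ^ (p - 1) := by positivity
    linarith

lemma mVal_le_one (p : ℝ) (hp : 2 ≤ p) : mVal p ≤ 1 := by
  have := (mVal_spec p hp).2 0 (by norm_num)
  rw [Real.zero_rpow (by linarith), Real.zero_rpow (by linarith)] at this
  simpa using this

lemma case_neg (p : ℝ) (hp : 2 ≤ p) (u : ℝ) (hu : 0 ≤ u) :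
    1 ≤ (1 + u) ^ p - u ^ p - p * u ^ (p - 1) := by
  have hd : ∀ x : ℝ, HasDerivAt (fun u : ℝ => (1 + u) ^ p - u ^ p - p * u ^ (p - 1))
      (1 * p * (1 + x) ^ (p - 1) - 1 * p * x ^ (p - 1)
        - p * (1 * (p - 1) * x ^ (p - 1 - 1))) x := fun x =>
    ((((hasDerivAt_id x).const_add 1).rpow_const (Or.inr (by linarith))).sub
      ((hasDerivAt_id x).rpow_const (Or.inr (by linarith)))).sub
      (((hasDerivAt_id x).rpow_const (Or.inr (by linarith))).const_mul p)
  have hm : MonotoneOn (fun u : ℝ => (1 + u) ^ p - u ^ p - p * u ^ (p - 1)) (Set.Ici 0) := by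
    apply monotoneOn_of_deriv_nonneg (convex_Ici 0)
    · exact fun x _ => (hd x).continuousAt.continuousWithinAt
    · exact fun x _ => (hd x).differentiableAt.differentiableWithinAt
    · intro x hx
      rw [interior_Ici] at hx
      have hx : 0 < x := hx
      rw [(hd x).deriv]
      have := tang hx (b := 1 + x) (q := p - 1) (by linarith) (by linarith)
      have h3 := mul_nonneg (by linarith : 0 ≤ p) (sub_nonneg.2 this)
      nlinarith
  have := hm (Set.mem_Ici.2 le_rfl) (Set.mem_Ici.2 hu) hu
  simp only [Real.zero_rpow (by linarith : p ≠ 0), Real.zero_rpow (by linarith : p - 1 ≠ 0)] at this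
  simpa using this

lemma case_mid (p : ℝ) (hp : 2 ≤ p) (u : ℝ) (hu : 1 / 2 ≤ u) (hu1 : u ≤ 1) :
    mVal p ≤ p * u ^ (p - 1) + (1 - u) ^ p - u ^ p := by
  have hd : ∀ x : ℝ, HasDerivAt (fun u : ℝ => p * u ^ (p - 1) + (1 - u) ^ p - u ^ p)
      (p * (1 * (p - 1) * x ^ (p - 1 - 1)) + (-1) * p * (1 - x) ^ (p - 1)
        - 1 * p * x ^ (p - 1)) x := fun x =>
    ((((hasDerivAt_id x).rpow_const (Or.inr (by linarith))).const_mul p).add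
      (((hasDerivAt_id x).const_sub 1).rpow_const (Or.inr (by linarith)))).sub
      ((hasDerivAt_id x).rpow_const (Or.inr (by linarith)))
  have hm : MonotoneOn (fun u : ℝ => p * u ^ (p - 1) + (1 - u) ^ p - u ^ p)
      (Set.Icc (1/2) 1) := by
    apply monotoneOn_of_deriv_nonneg (convex_Icc _ _)
    · exact fun x _ => (hd x).continuousAt.continuousWithinAt
    · exact fun x _ => (hd x).differentiableAt.differentiableWithinAt
    · intro x hx
      rw [interior_Icc] at hx
      obtain ⟨h1, h2⟩ := hx
      have hx : 0 < x := by linarith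
      have hx' : 0 < 1 - x := by linarith
      rw [(hd x).deriv]
      have e1 : x ^ (p - 1) = x ^ (p - 1 - 1) * x := by
        rw [← Real.rpow_add_one hx.ne']; ring_nf
      have e2 : (1 - x) ^ (p - 1) = (1 - x) ^ (p - 1 - 1) * (1 - x) := by
        rw [← Real.rpow_add_one hx'.ne']; ring_nf
      have h4 : (1 - x) ^ (p - 1 - 1) ≤ x ^ (p - 1 - 1) :=
        Real.rpow_le_rpow hx'.le (by linarith) (by linarith)
      rw [e1, e2]
      have h5 := mul_nonneg (by linarith : 0 ≤ p) (mul_nonneg hx'.le (sub_nonneg.2 h4))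
      have h6 : 0 ≤ x ^ (p - 1 - 1) := by positivity
      have h7 := mul_nonneg (by linarith : 0 ≤ p) (mul_nonneg (by linarith : 0 ≤ p - 2) h6)
      nlinarith
  have := hm (by norm_num) ⟨hu, hu1⟩ hu
  exact ((mVal_spec p hp).2 (1/2) (by norm_num)).trans this

lemma case_big (p : ℝ) (hp : 2 ≤ p) (u : ℝ) (hu1 : 1 ≤ u) :
    mVal p ≤ p * u ^ (p - 1) + (u - 1) ^ p - u ^ p := by
  have hd : ∀ x : ℝ, HasDerivAt (fun u : ℝ => p * u ^ (p - 1) + (u - 1) ^ p - u ^ p)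
      (p * (1 * (p - 1) * x ^ (p - 1 - 1)) + 1 * p * (x - 1) ^ (p - 1)
        - 1 * p * x ^ (p - 1)) x := fun x =>
    ((((hasDerivAt_id x).rpow_const (Or.inr (by linarith))).const_mul p).add
      (((hasDerivAt_id x).sub_const 1).rpow_const (Or.inr (by linarith)))).sub
      ((hasDerivAt_id x).rpow_const (Or.inr (by linarith)))
  have hm : MonotoneOn (fun u : ℝ => p * u ^ (p - 1) + (u - 1) ^ p - u ^ p)
      (Set.Ici 1) := by
    apply monotoneOn_of_deriv_nonneg (convex_Ici _)
    · exact fun x _ => (hd x).continuousAt.continuousWithinAt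
    · exact fun x _ => (hd x).differentiableAt.differentiableWithinAt
    · intro x hx
      rw [interior_Ici] at hx
      have hx : 1 < x := hx
      rw [(hd x).deriv]
      have := tang (a := x) (b := x - 1) (q := p - 1) (by linarith) (by linarith) (by linarith)
      have h3 := mul_nonneg (by linarith : 0 ≤ p) (sub_nonneg.2 this)
      nlinarith
  have := hm (Set.mem_Ici.2 le_rfl) (Set.mem_Ici.2 hu1) hu1
  simp only [sub_self, Real.zero_rpow (by linarith : p ≠ 0), Real.one_rpow] at this
  have := mVal_le_one p hp
  linarith

lemma phi_mul (p : ℝ) (hp : 2 ≤ p) (t : ℝ) : |t| ^ (p - 2) * t * t = |t| ^ p := by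
  rcases eq_or_ne t 0 with rfl | ht
  · simp [Real.zero_rpow (by linarith : p ≠ 0)]
  · have h : 0 < |t| := abs_pos.2 ht
    rw [mul_assoc, ← abs_mul_abs_self t, ← mul_assoc, ← Real.rpow_add_one h.ne',
      ← Real.rpow_add_one h.ne']
    ring_nf

lemma phi_pos (p : ℝ) (hp : 2 ≤ p) (t : ℝ) (ht : 0 ≤ t) : |t| ^ (p - 2) * t = t ^ (p - 1) := by
  rcases ht.eq_or_lt with rfl | ht
  · simp [Real.zero_rpow (by linarith : p - 1 ≠ 0)]
  · rw [abs_of_pos ht, ← Real.rpow_add_one ht.ne']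
    ring_nf

lemma scalar (p : ℝ) (hp : 2 ≤ p) (t : ℝ) :
    mVal p ≤ |1 - t| ^ p + p * (|t| ^ (p - 2) * t) - |t| ^ p := by
  rcases le_total 0 t with h | h
  · rw [phi_pos p hp t h, abs_of_nonneg h]
    rcases le_total t 1 with h1 | h1
    · rw [abs_of_nonneg (by linarith : 0 ≤ 1 - t)]
      rcases le_total t (1/2) with h2 | h2
      · linarith [(mVal_spec p hp).2 t ⟨h, h2⟩]
      · linarith [case_mid p hp t h2 h1]
    · rw [abs_sub_comm, abs_of_nonneg (by linarith : 0 ≤ t - 1)]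
      linarith [case_big p hp t h1]
  · have h1 := phi_pos p hp (-t) (by linarith)
    have h2 := case_neg p hp (-t) (by linarith)
    rw [abs_neg] at h1
    rw [abs_of_nonneg (by linarith : 0 ≤ 1 - t)]
    rw [abs_of_nonpos h] at *
    have : (1 + -t) = 1 - t := by ring
    rw [this] at h2
    have h3 := mVal_le_one p hp
    rw [← h1] at h2
    linarith

lemma twovar (p : ℝ) (hp : 2 ≤ p) (f g : ℝ) :
    mVal p * |g - f| ^ p ≤ |f| ^ p - (p * (|g| ^ (p - 2) * g * f) - (p - 1) * |g| ^ p) := by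
  rcases eq_or_ne f g with rfl | h
  · rw [phi_mul p hp, sub_self, abs_zero, Real.zero_rpow (by linarith)]
    linarith
  · have hd : f - g ≠ 0 := sub_ne_zero.2 h
    have hda : 0 < |f - g| := abs_pos.2 hd
    obtain ⟨d, hdd⟩ : ∃ d, d = f - g := ⟨_, rfl⟩
    rw [← hdd] at hd hda
    obtain ⟨t, ht⟩ : ∃ t, t = -g / d := ⟨_, rfl⟩
    have hg : g = -(t * d) := by rw [ht]; field_simp
    have hf : f = (1 - t) * d := by linarith
    have h1 := mul_le_mul_of_nonneg_right (scalar p hp t) (by positivity : 0 ≤ |d| ^ p)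
    have e : g - f = -d := by linarith
    rw [e, abs_neg, hf, hg, abs_neg, abs_mul, abs_mul, Real.mul_rpow (abs_nonneg _) (abs_nonneg _),
      Real.mul_rpow (abs_nonneg _) (abs_nonneg _), Real.mul_rpow (abs_nonneg _) (abs_nonneg _)]
    have e1 := phi_mul p hp t
    have e2 := phi_mul p hp d
    refine h1.trans (le_of_eq ?_)
    rw [← e1, ← e2]; ring

lemma young (p : ℝ) (hp : 2 ≤ p) (a b : ℝ) :
    p * (|a| ^ (p - 2) * a * b) ≤ (p - 1) * |a| ^ p + |b| ^ p := by
  rcases eq_or_ne a 0 with rfl | h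
  · simp only [mul_zero, zero_mul, abs_zero, Real.zero_rpow (by linarith : p ≠ 0)]
    positivity
  · have ha : 0 < |a| := abs_pos.2 h
    have h1 := tang ha (abs_nonneg b) (by linarith : 1 ≤ p)
    have e1 := phi_pos p hp |a| ha.le
    have e2 := phi_mul p hp |a|
    rw [abs_abs] at e1 e2
    have h2 : |a| ^ (p - 2) * a * b ≤ |a| ^ (p - 2) * |a| * |b| := by
      rw [mul_assoc, mul_assoc]
      refine mul_le_mul_of_nonneg_left ?_ (by positivity)
      rw [← abs_mul]; exact le_abs_self _
    have h3 := mul_le_mul_of_nonneg_left h2 (by linarith : 0 ≤ p)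
    rw [← e1] at h1
    have : p * (|a| ^ (p - 2) * |a|) * (|b| - |a|) = p * (|a| ^ (p - 2) * |a| * |b|) - p * |a| ^ p := by
      rw [← e2]; ring
    linarith

lemma step (p : ℝ) (hp : 2 ≤ p) (n y z : ℝ) (hn : 0 ≤ n) :
    mVal p * |y - ((n + 1) * y - n * z)| ^ p + ((n + 1) * |y| ^ p - n * |z| ^ p)
      ≤ |(n + 1) * y - n * z| ^ p := by
  have h1 := twovar p hp ((n + 1) * y - n * z) y
  have h2 := mul_le_mul_of_nonneg_left (young p hp y z) hn
  have e := phi_mul p hp y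
  have : p * (|y| ^ (p - 2) * y * ((n + 1) * y - n * z))
    = p * (n + 1) * |y| ^ p - n * (p * (|y| ^ (p - 2) * y * z)) := by rw [← e]; ring
  rw [this] at h1
  linarith

lemma upper (p : ℝ) (hp : 2 ≤ p) (x : ℕ → ℝ) (hx : Summable fun n : ℕ => |x (n + 1)| ^ p) :
      ∑' n : ℕ, |(1 / ((n : ℝ) + 1)) * (∑ k ∈ Finset.range (n + 1), x (k + 1)) - x (n + 1)| ^ p
        ≤ (mVal p)⁻¹ * ∑' n : ℕ, |x (n + 1)| ^ p := by
  have hm := mVal_pos p hp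
  have key : ∀ N : ℕ, mVal p * ∑ n ∈ Finset.range N,
      |(1 / ((n : ℝ) + 1)) * (∑ k ∈ Finset.range (n + 1), x (k + 1)) - x (n + 1)| ^ p
      + N * |(1 / (N : ℝ)) * (∑ k ∈ Finset.range N, x (k + 1))| ^ p
      ≤ ∑ n ∈ Finset.range N, |x (n + 1)| ^ p := by
    intro N
    induction N with
    | zero => simp
    | succ n ih =>
      rw [Finset.sum_range_succ, Finset.sum_range_succ (fun n => |x (n + 1)| ^ p)]
      have h := step p hp n ((1 / ((n : ℝ) + 1)) * (∑ k ∈ Finset.range (n + 1), x (k + 1)))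
        ((1 / (n : ℝ)) * (∑ k ∈ Finset.range n, x (k + 1))) (by positivity)
      have e : ((n : ℝ) + 1) * ((1 / ((n : ℝ) + 1)) * (∑ k ∈ Finset.range (n + 1), x (k + 1)))
        - n * ((1 / (n : ℝ)) * (∑ k ∈ Finset.range n, x (k + 1))) = x (n + 1) := by
        rcases Nat.eq_zero_or_pos n with rfl | hn
        · simp
        · have : (0 : ℝ) < n := by exact_mod_cast hn
          rw [Finset.sum_range_succ]; field_simp; ring
      rw [e] at h
      push_cast
      linarith
  refine Real.tsum_le_of_sum_range_le (fun n => by positivity) fun N => ?_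
  rw [inv_mul_eq_div, le_div_iff₀ hm]
  have h1 := key N
  have h2 := hx.sum_le_tsum (Finset.range N) (fun n _ => by positivity)
  have h3 : 0 ≤ N * |(1 / (N : ℝ)) * (∑ k ∈ Finset.range N, x (k + 1))| ^ p := by positivity
  linarith

lemma lim_aux (p α : ℝ) (hp : 2 ≤ p) :
    Filter.Tendsto (fun n : ℕ => (n : ℝ) * ((1 + α / n) ^ p - 1)) Filter.atTop (nhds (α * p)) := by
  have hd : HasDerivAt (fun h : ℝ => (1 + α * h) ^ p) (α * p) 0 := by
    have h1 : HasDerivAt (fun h : ℝ => 1 + α * h) (α * 1) 0 :=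
      ((hasDerivAt_id (0:ℝ)).const_mul α).const_add 1
    have := h1.rpow_const (p := p) (Or.inr (by linarith))
    simpa using this
  have h2 := hd.tendsto_slope_zero
  have h3 : Filter.Tendsto (fun n : ℕ => ((n : ℝ))⁻¹) Filter.atTop (nhdsWithin 0 {0}ᶜ) := by
    rw [tendsto_nhdsWithin_iff]
    refine ⟨tendsto_inv_atTop_nhds_zero_nat, ?_⟩
    filter_upwards [Filter.eventually_gt_atTop 0] with n hn
    have : (n : ℝ) ≠ 0 := by positivity
    simpa using hn.ne'
  have h4 := h2.comp h3
  refine h4.congr fun n => ?_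
  simp [div_eq_mul_inv]

lemma exists_t (p : ℝ) (hp : 2 ≤ p) (c : ℝ) (hc : c < (mVal p)⁻¹) :
    ∃ t : ℝ, 0 < t ∧ t ≤ 1 / 2 ∧ c * (p * t ^ (p - 1) + (1 - t) ^ p - t ^ p) < 1 := by
  obtain ⟨⟨t, ⟨h0, h1⟩, h⟩, -⟩ := mVal_spec p hp
  have hm := mVal_pos p hp
  have hc' : c * (p * t ^ (p - 1) + (1 - t) ^ p - t ^ p) < 1 := by
    rw [← h]
    rwa [← one_div, lt_div_iff₀ hm] at hc
  rcases h0.eq_or_lt with rfl | h0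
  · have hcont : Continuous (fun t : ℝ => c * (p * t ^ (p - 1) + (1 - t) ^ p - t ^ p)) :=
      continuous_const.mul (fcont p hp)
    have h2 : ∀ᶠ t in nhds (0:ℝ), c * (p * t ^ (p - 1) + (1 - t) ^ p - t ^ p) < 1 :=
      hcont.continuousAt.eventually_lt continuousAt_const hc'
    have h3 : ∀ᶠ t in nhdsWithin (0:ℝ) (Set.Ioi 0),
        c * (p * t ^ (p - 1) + (1 - t) ^ p - t ^ p) < 1 := h2.filter_mono nhdsWithin_le_nhds
    have h4 : ∀ᶠ t in nhdsWithin (0:ℝ) (Set.Ioi 0), t ∈ Set.Ioo (0:ℝ) (1/2) :=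
      Ioo_mem_nhdsGT (by norm_num)
    obtain ⟨t, ht, ht2⟩ := (h3.and h4).exists
    exact ⟨t, ht2.1, ht2.2.le, ht⟩
  · exact ⟨t, h0, h1, hc'⟩

lemma exists_L (p : ℝ) (hp : 2 ≤ p) (c : ℝ) (hc : c < (mVal p)⁻¹) :
    ∃ α L : ℝ, 2 ≤ α ∧ α * p - 1 < L ∧ (0 < c → c * (L + (α - 1) ^ p) < α ^ p) := by
  obtain ⟨t, h0, h1, h⟩ := exists_t p hp c hc
  have hα : 2 ≤ 1 / t := by rw [le_div_iff₀ h0]; linarith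
  by_cases hc0 : 0 < c
  · have ht : 0 < t ^ p := by positivity
    have e1 : t ^ p = t ^ (p - 1) * t := by
      rw [← Real.rpow_add_one h0.ne']; ring_nf
    have e2 : (1 / t - 1) = (1 - t) / t := by field_simp
    have key : 1 / t * p - 1 < (1 / t) ^ p / c - (1 / t - 1) ^ p := by
      rw [lt_sub_iff_add_lt, lt_div_iff₀ hc0, e2, Real.div_rpow (by linarith) h0.le,
        Real.div_rpow (by linarith) h0.le, Real.one_rpow, lt_div_iff₀ ht]
      calc _ = c * (p * t ^ (p - 1) + (1 - t) ^ p - t ^ p) := by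
            have : t ^ (p - 1) ≠ 0 := by positivity
            rw [e1]; field_simp; ring
        _ < 1 := h
    obtain ⟨L, hL1, hL2⟩ := exists_between key
    refine ⟨1 / t, L, hα, hL1, fun _ => ?_⟩
    rw [lt_sub_iff_add_lt, lt_div_iff₀ hc0] at hL2
    linarith
  · exact ⟨1 / t, 1 / t * p, hα, by linarith, fun h => absurd h hc0⟩

set_option maxHeartbeats 2000000 in
lemma lower (p : ℝ) (hp : 2 ≤ p) (c : ℝ) (hc : c < (mVal p)⁻¹) : ∃ x : ℕ → ℝ,
      (Summable fun n : ℕ => |x (n + 1)| ^ p) ∧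
      0 < ∑' n : ℕ, |x (n + 1)| ^ p ∧
      c * ∑' n : ℕ, |x (n + 1)| ^ p <
        ∑' n : ℕ,
          |(1 / ((n : ℝ) + 1)) * (∑ k ∈ Finset.range (n + 1), x (k + 1)) - x (n + 1)| ^ p := by
  obtain ⟨α, L, hα, hL, hcL⟩ := exists_L p hp c hc
  have hev : ∀ᶠ n : ℕ in Filter.atTop, (n : ℝ) * ((1 + α / n) ^ p - 1) < L + 1 :=
    (lim_aux p α hp).eventually_lt_const (by linarith)
  obtain ⟨N, hN⟩ := Filter.eventually_atTop.1 (hev.and (Filter.eventually_ge_atTop 1))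
  have hN1 : 1 ≤ N := (hN N le_rfl).2
  have hNL : ∀ n ≥ N, (n : ℝ) * ((1 + α / n) ^ p - 1) < L + 1 := fun n hn => (hN n hn).1
  clear hN hev
  obtain ⟨y, hy⟩ : ∃ y : ℕ → ℝ, y = fun n => ∏ k ∈ Finset.Ico N n, ((k : ℝ) / (k + α)) := ⟨_, rfl⟩
  have y1 : ∀ n ≤ N, y n = 1 := by
    intro n hn; rw [hy]; simp [Finset.Ico_eq_empty_of_le hn]
  have ys : ∀ n ≥ N, n * y n = (n + α) * y (n + 1) := by
    intro n hn
    have : (n : ℝ) + α ≠ 0 := by positivity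
    rw [hy]; simp only []
    rw [Finset.prod_Ico_succ_top hn]; field_simp
  have ypos : ∀ n, 0 < y n := by
    intro n; rw [hy]
    refine Finset.prod_pos fun k hk => ?_
    have : 1 ≤ k := hN1.trans (Finset.mem_Ico.1 hk).1
    have : (0:ℝ) < k := by exact_mod_cast this
    positivity
  have ybd : ∀ n ≥ N, n * y n ≤ N := by
    intro n hn
    induction n, hn using Nat.le_induction with
    | base => rw [y1 N le_rfl]; simp
    | succ n hn ih =>
      have := ys n hn
      push_cast
      nlinarith [ypos (n + 1)]
  have hNp : (0:ℝ) < N := by exact_mod_cast hN1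
  have ybd2 : ∀ n ≥ N, y n ^ p ≤ (N:ℝ) ^ p * (1 / (n : ℝ) ^ p) := by
    intro n hn
    have hn0 : (0:ℝ) < n := lt_of_lt_of_le hNp (by exact_mod_cast hn)
    rw [mul_one_div, ← Real.div_rpow hNp.le hn0.le]
    refine Real.rpow_le_rpow (ypos n).le ?_ (by linarith)
    rw [le_div_iff₀ hn0]; linarith [ybd n hn]
  have hs : Summable fun n : ℕ => (N:ℝ) ^ p * (1 / (n : ℝ) ^ p) :=
    (Real.summable_one_div_nat_rpow.2 (by linarith)).mul_left _
  have hsY : Summable fun n : ℕ => y (n + N + 1) ^ p := by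
    refine Summable.of_nonneg_of_le (fun n => by have := ypos (n + N + 1); positivity)
      (fun n => ybd2 _ (by omega)) ?_
    have h := (summable_nat_add_iff (f := fun n : ℕ => (N:ℝ) ^ p * (1 / (n : ℝ) ^ p)) (N + 1)).2 hs
    exact h
  set Y := ∑' n : ℕ, y (n + N + 1) ^ p with hY
  have hYpos : 0 < Y := hsY.tsum_pos (fun n => by have := ypos (n + N + 1); positivity) 0
    (by have := ypos (0 + N + 1); positivity)
  -- telescoping
  have tel : ∀ M : ℕ, (N : ℝ) - ((M + N : ℕ) : ℝ) * y (M + N) ^ p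
      ≤ L * ∑ n ∈ Finset.range M, y (n + N + 1) ^ p := by
    intro M
    induction M with
    | zero => simp [y1 N le_rfl]
    | succ M ih =>
      rw [Finset.sum_range_succ]
      have h1 := ys (M + N) (by omega)
      have h2 := hNL (M + N) (by omega)
      have hn0 : (0:ℝ) < ((M + N : ℕ) : ℝ) := by
        have : 0 < M + N := by omega
        exact_mod_cast this
      have e : M + 1 + N = M + N + 1 := by ring
      rw [e]
      push_cast [Nat.cast_succ] at *
      set n : ℝ := (M : ℝ) + N
      have e2 : y (M + N) = (1 + α / n) * y (M + N + 1) := by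
        field_simp; linarith
      have hz := ypos (M + N + 1)
      have e3 : y (M + N) ^ p = (1 + α / n) ^ p * y (M + N + 1) ^ p := by
        rw [e2, Real.mul_rpow (by positivity) hz.le]
      have hzp : 0 < y (M + N + 1) ^ p := by positivity
      rw [e3] at ih
      have h3 := mul_lt_mul_of_pos_right h2 hzp
      nlinarith
  have hLpos : 0 < L := by nlinarith
  have hlim : Filter.Tendsto (fun M : ℕ => ((M + N : ℕ) : ℝ) * y (M + N) ^ p)
      Filter.atTop (nhds 0) := by
    have hb : Filter.Tendsto (fun n : ℕ => (N:ℝ) ^ p * (n : ℝ) ^ (-(p - 1))) Filter.atTop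
        (nhds 0) := by
      have := ((tendsto_rpow_neg_atTop (by linarith : 0 < p - 1)).comp
        tendsto_natCast_atTop_atTop).const_mul ((N:ℝ) ^ p)
      simpa using this
    have hb2 := (Filter.tendsto_add_atTop_iff_nat N).2 hb
    refine squeeze_zero (fun M => ?_) (fun M => ?_) hb2
    · have := ypos (M + N); positivity
    · have hn0 : (0:ℝ) < ((M + N : ℕ) : ℝ) := by
        have : 0 < M + N := by omega
        exact_mod_cast this
      refine (mul_le_mul_of_nonneg_left (ybd2 (M + N) (by omega)) hn0.le).trans (le_of_eq ?_)
      have : -(p - 1) = 1 - p := by ring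
      rw [this, Real.rpow_sub hn0, Real.rpow_one]
      ring
  have hNY : (N : ℝ) ≤ L * Y := by
    have h1 : Filter.Tendsto (fun M : ℕ => (N : ℝ) - ((M + N : ℕ) : ℝ) * y (M + N) ^ p)
      Filter.atTop (nhds (N - 0)) := hlim.const_sub _
    rw [sub_zero] at h1
    refine le_of_tendsto' h1 fun M => (tel M).trans ?_
    refine mul_le_mul_of_nonneg_left ?_ hLpos.le
    exact hsY.sum_le_tsum _ (fun n _ => by have := ypos (n + N + 1); positivity)
  -- the sequence
  obtain ⟨x, hx⟩ : ∃ x : ℕ → ℝ, ∀ n : ℕ, x (n + 1) = ((n : ℝ) + 1) * y (n + 1) - n * y n :=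
    ⟨fun n => (n : ℝ) * y n - ((n : ℝ) - 1) * y (n - 1), fun n => by simp⟩
  have hsum : ∀ n : ℕ, ∑ k ∈ Finset.range n, x (k + 1) = n * y n := by
    intro n
    induction n with
    | zero => simp
    | succ n ih => rw [Finset.sum_range_succ, ih, hx]; push_cast; ring
  have hdiff : ∀ n : ℕ, (1 / ((n : ℝ) + 1)) * (∑ k ∈ Finset.range (n + 1), x (k + 1)) - x (n + 1)
      = y (n + 1) - x (n + 1) := by
    intro n; rw [hsum]; push_cast
    have : (n : ℝ) + 1 ≠ 0 := by positivity
    field_simp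
  have hxs : ∀ n < N, x (n + 1) = 1 := by
    intro n hn; rw [hx, y1 _ hn, y1 _ hn.le]; ring
  have hxl : ∀ n ≥ N, x (n + 1) = (1 - α) * y (n + 1) := by
    intro n hn; rw [hx, ys n hn]; ring
  have hxp : ∀ n, |x (n + N + 1)| ^ p = (α - 1) ^ p * y (n + N + 1) ^ p := by
    intro n
    have := ypos (n + N + 1)
    rw [hxl _ (by omega), abs_mul, abs_of_pos this, abs_sub_comm, abs_of_pos (by linarith),
      Real.mul_rpow (by linarith) this.le]
  have hdp : ∀ n, |y (n + N + 1) - x (n + N + 1)| ^ p = α ^ p * y (n + N + 1) ^ p := by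
    intro n
    have := ypos (n + N + 1)
    rw [hxl _ (by omega)]
    have e : y (n + N + 1) - (1 - α) * y (n + N + 1) = α * y (n + N + 1) := by ring
    rw [e, abs_of_pos (by positivity), Real.mul_rpow (by linarith) this.le]
  have hS1 : Summable fun n : ℕ => |x (n + 1)| ^ p := by
    rw [← summable_nat_add_iff N]
    simp only [hxp]
    exact hsY.mul_left _
  have hS2 : Summable fun n : ℕ => |y (n + 1) - x (n + 1)| ^ p := by
    rw [← summable_nat_add_iff N]
    simp only [hdp]
    exact hsY.mul_left _
  have T1 : ∑' n : ℕ, |x (n + 1)| ^ p = N + (α - 1) ^ p * Y := by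
    rw [← hS1.sum_add_tsum_nat_add N]
    simp only [hxp]
    rw [tsum_mul_left]
    congr 1
    rw [Finset.sum_congr rfl (g := fun _ => (1:ℝ))]
    · simp
    · intro n hn; rw [hxs n (Finset.mem_range.1 hn)]; simp
  have T2 : ∑' n : ℕ, |y (n + 1) - x (n + 1)| ^ p = α ^ p * Y := by
    rw [← hS2.sum_add_tsum_nat_add N]
    simp only [hdp]
    rw [tsum_mul_left, Finset.sum_eq_zero, zero_add]
    intro n hn
    have hn := Finset.mem_range.1 hn
    rw [hxs n hn, y1 _ hn, sub_self, abs_zero, Real.zero_rpow (by linarith)]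
  have hA : 0 < (α - 1) ^ p := Real.rpow_pos_of_pos (by linarith) _
  have hB : 0 < α ^ p := Real.rpow_pos_of_pos (by linarith) _
  have hT : 0 < N + (α - 1) ^ p * Y := by positivity
  refine ⟨x, hS1, by rw [T1]; exact hT, ?_⟩
  simp only [hdiff]
  rw [T1, T2]
  by_cases hc0 : 0 < c
  · have h1 := mul_lt_mul_of_pos_right (hcL hc0) hYpos
    have h2 := mul_le_mul_of_nonneg_left hNY hc0.le
    linarith
  · have h1 : c * (N + (α - 1) ^ p * Y) ≤ 0 := mul_nonpos_of_nonpos_of_nonneg (not_lt.1 hc0) hT.le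
    have : 0 < α ^ p * Y := by positivity
    linarith

/-- Theorem 4: for `p ≥ 2`, the operator norm of `C - I` on `ℓ^p` equals `m_p^(-1/p)`:
with `y_n = (1/n) ∑_{k=1}^n x_k`, the inequality `∑ |y_n - x_n|^p ≤ (1/m_p) ∑ |x_n|^p`
holds, and `1/m_p` is the least such constant. (Sequences are indexed so that term `n`
of the paper is `x (n+1)` here, `n : ℕ`.) -/
theorem stmt14 (p : ℝ) (hp : 2 ≤ p) :
    (∀ x : ℕ → ℝ, (Summable fun n : ℕ => |x (n + 1)| ^ p) →
      ∑' n : ℕ, |(1 / ((n : ℝ) + 1)) * (∑ k ∈ Finset.range (n + 1), x (k + 1)) - x (n + 1)| ^ p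
        ≤ (mVal p)⁻¹ * ∑' n : ℕ, |x (n + 1)| ^ p) ∧
    ∀ c : ℝ, c < (mVal p)⁻¹ → ∃ x : ℕ → ℝ,
      (Summable fun n : ℕ => |x (n + 1)| ^ p) ∧
      0 < ∑' n : ℕ, |x (n + 1)| ^ p ∧
      c * ∑' n : ℕ, |x (n + 1)| ^ p <
        ∑' n : ℕ,
          |(1 / ((n : ℝ) + 1)) * (∑ k ∈ Finset.range (n + 1), x (k + 1)) - x (n + 1)| ^ p := by
  exact ⟨upper p hp, lower p hp⟩
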